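/- Let s, t ∈ ℂ satisfy t² = 1/3 and s^{12} = −576(26t − 15), and let d¹ be the 2×2 matrix over R = ℂ[u,v,x,y] with entries a = y² − v + (1/2)·x·(s·u)² + ((2t+1)/8)·(s·u)⁶, b = −x + y·(s·u) + ((t+1)/4)·(s·u)⁴, c = x² + y·x·(s·u) + (t/4)·x·(s·u)⁴ + ((2t+1)/4)·y·(s·u)⁵ − ((9t+5)/48)·(s·u)⁸, d = y² + v + (1/2)·x·(s·u)² + ((2t+1)/8)·(s·u)⁶; set d⁰ = adjugate(d¹) and let d = [[0, d¹], [d⁰, 0]] be the 4×4 twisted differential of the resulting matrix factorisation of x³ + y⁴ − u^{12} − v². Let 𝔈 be the ℂ-vector space of 4×4 matrices F over R of block-diagonal form F = [[f⁰, 0], [0, f¹]] (with 2×2 blocks) satisfying d·F = F·d, and let 𝔑 ⊆ 𝔈 be the subspace of all matrices of the form d·H + H·d, where H ranges over 4×4 matrices over R of block off-diagonal form [[0, h¹], [h⁰, 0]]. Then the quotient ℂ-vector space 𝔈/𝔑 (the space of even endomorphisms of the matrix factorisation up to homotopy) has dimension 16. -/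

import Mathlib

/-!
Put `w = s u`, let `b`, `c` be the off-diagonal entries of `d¹` and `p` the part of its diagonal
which is free of `v`. Then `d¹ = (N - v) σ` with `N = !![p, -b; c, -p]` free of `v` and
`σ = diag(1, -1)`, so up to the automorphism `σ` the factorisation is `(N - v, N + v)`. Division
with remainder by `v - N` makes every even endomorphism homotopic to a constant one, given by a
matrix commuting with `N`. Since `b` is prime to `p`, such a matrix is of the form `r + k N`, and
`k N` is null-homotopic because `2 N = (N - v) + (N + v)`. So every even endomorphism is homotopic
to a scalar `r`. As `adj X + X = tr X` for `2 × 2` matrices, the scalar `r` is null-homotopic if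
and only if it lies in the ideal of the entries of `d¹`.

Modulo this ideal `v = 0` and `x` is a polynomial in `w` and `y`. With
`y₀ = y - (t + 1 / 2) w ^ 3` the remaining relations become `w ^ 5 y₀ = 0` and a quadratic one,
`y₀ ^ 2 + β w ^ 3 y₀ + γ w ^ 6 = 0` with `γ ≠ 0`, whence also `w ^ 11 = 0`; a basis of the quotient
is given by `1, w, …, w ^ 10` and `y₀, w y₀, …, w ^ 4 y₀`.
-/

open MvPolynomial

noncomputable section

/-- The polynomial ring `R = ℂ[u,v,x,y]`. -/
abbrev R4 : Type := MvPolynomial (Fin 4) ℂ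

def u : R4 := X 0
def v : R4 := X 1
def x : R4 := X 2
def y : R4 := X 3

/-- The matrix `d¹` of the E₆ orbifold equivalence. -/
def dE6 (s t : ℂ) : Matrix (Fin 2) (Fin 2) R4 :=
  !![y ^ 2 - v + C (1/2 : ℂ) * x * (C s * u) ^ 2 + C ((2*t+1)/8) * (C s * u) ^ 6,
     -x + y * (C s * u) + C ((t+1)/4) * (C s * u) ^ 4;
     x ^ 2 + y * x * (C s * u) + C (t/4) * x * (C s * u) ^ 4
       + C ((2*t+1)/4) * y * (C s * u) ^ 5 - C ((9*t+5)/48) * (C s * u) ^ 8,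
     y ^ 2 + v + C (1/2 : ℂ) * x * (C s * u) ^ 2 + C ((2*t+1)/8) * (C s * u) ^ 6]

/-- The twisted differential `d = [[0, d¹], [d⁰, 0]]` with `d⁰` the adjugate of `d¹`. -/
def DE6 (s t : ℂ) : Matrix (Fin 2 ⊕ Fin 2) (Fin 2 ⊕ Fin 2) R4 :=
  Matrix.fromBlocks 0 (dE6 s t) (dE6 s t).adjugate 0

section Blocks

variable {F G : Matrix (Fin 2 ⊕ Fin 2) (Fin 2 ⊕ Fin 2) R4} {c : ℂ}

lemma tb11_add : (F + G).toBlocks₁₁ = F.toBlocks₁₁ + G.toBlocks₁₁ := rfl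
lemma tb12_add : (F + G).toBlocks₁₂ = F.toBlocks₁₂ + G.toBlocks₁₂ := rfl
lemma tb21_add : (F + G).toBlocks₂₁ = F.toBlocks₂₁ + G.toBlocks₂₁ := rfl
lemma tb22_add : (F + G).toBlocks₂₂ = F.toBlocks₂₂ + G.toBlocks₂₂ := rfl
lemma tb11_smul : (c • F).toBlocks₁₁ = c • F.toBlocks₁₁ := rfl
lemma tb12_smul : (c • F).toBlocks₁₂ = c • F.toBlocks₁₂ := rfl
lemma tb21_smul : (c • F).toBlocks₂₁ = c • F.toBlocks₂₁ := rfl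
lemma tb22_smul : (c • F).toBlocks₂₂ = c • F.toBlocks₂₂ := rfl

end Blocks

/-- The ℂ-vector space `𝔈` of even (block-diagonal) endomorphisms commuting with `D`. -/
def EvenEnd (D : Matrix (Fin 2 ⊕ Fin 2) (Fin 2 ⊕ Fin 2) R4) :
    Submodule ℂ (Matrix (Fin 2 ⊕ Fin 2) (Fin 2 ⊕ Fin 2) R4) where
  carrier := {F | F.toBlocks₁₂ = 0 ∧ F.toBlocks₂₁ = 0 ∧ D * F = F * D}
  zero_mem' := ⟨rfl, rfl, by simp⟩
  add_mem' := by
    rintro F G ⟨hF1, hF2, hF3⟩ ⟨hG1, hG2, hG3⟩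
    exact ⟨by rw [tb12_add, hF1, hG1, add_zero],
           by rw [tb21_add, hF2, hG2, add_zero],
           by rw [Matrix.mul_add, hF3, hG3, Matrix.add_mul]⟩
  smul_mem' := by
    rintro c F ⟨h1, h2, h3⟩
    exact ⟨by rw [tb12_smul, h1, smul_zero],
           by rw [tb21_smul, h2, smul_zero],
           by rw [Matrix.mul_smul, h3, Matrix.smul_mul]⟩

/-- The subspace `𝔑` of null-homotopic even endomorphisms `D·H + H·D`
with `H` block off-diagonal. -/
def NullHtpy (D : Matrix (Fin 2 ⊕ Fin 2) (Fin 2 ⊕ Fin 2) R4) :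
    Submodule ℂ (Matrix (Fin 2 ⊕ Fin 2) (Fin 2 ⊕ Fin 2) R4) where
  carrier := {F | ∃ H, H.toBlocks₁₁ = 0 ∧ H.toBlocks₂₂ = 0 ∧ F = D * H + H * D}
  zero_mem' := ⟨0, rfl, rfl, by simp⟩
  add_mem' := by
    rintro F G ⟨H, h1, h2, h3⟩ ⟨K, k1, k2, k3⟩
    exact ⟨H + K, by rw [tb11_add, h1, k1, add_zero],
           by rw [tb22_add, h2, k2, add_zero],
           by rw [h3, k3, Matrix.mul_add, Matrix.add_mul]; abel⟩
  smul_mem' := by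
    rintro c F ⟨H, h1, h2, h3⟩
    exact ⟨c • H, by rw [tb11_smul, h1, smul_zero],
           by rw [tb22_smul, h2, smul_zero],
           by rw [h3, smul_add, Matrix.mul_smul, Matrix.smul_mul]⟩

open scoped Polynomial

section NullHomotopic

variable {M : Type*} [Ring M]

/-- The even endomorphism `(f₀, f₁)` of a matrix factorisation `(d⁰, d¹) = (a', a)` is
null-homotopic. The factorisation is given by two elements of an arbitrary ring, which stands for
a ring of square matrices. -/
def IsNullHomotopic (a a' f₀ f₁ : M) : Prop :=
  ∃ h₀ h₁, f₀ = a * h₀ + h₁ * a' ∧ f₁ = a' * h₁ + h₀ * a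

variable {a a' f₀ f₁ g₀ g₁ : M}

lemma IsNullHomotopic.add (hf : IsNullHomotopic a a' f₀ f₁) (hg : IsNullHomotopic a a' g₀ g₁) :
    IsNullHomotopic a a' (f₀ + g₀) (f₁ + g₁) := by
  obtain ⟨h₀, h₁, rfl, rfl⟩ := hf
  obtain ⟨k₀, k₁, rfl, rfl⟩ := hg
  exact ⟨h₀ + k₀, h₁ + k₁, by noncomm_ring, by noncomm_ring⟩

lemma IsNullHomotopic.mul_involution {σ : M} (hσ : σ * σ = 1)
    (hf : IsNullHomotopic a a' f₀ (σ * f₁ * σ)) : IsNullHomotopic (a * σ) (σ * a') f₀ f₁ := by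
  obtain ⟨h₀, h₁, e₀, e₁⟩ := hf
  have cancel (m : M) : σ * (σ * m) = m := by rw [← mul_assoc, hσ, one_mul]
  refine ⟨σ * h₀, h₁ * σ, by simp only [e₀, mul_assoc, cancel], ?_⟩
  calc f₁ = σ * (σ * f₁ * σ) * σ := by simp only [mul_assoc, cancel, hσ, mul_one]
    _ = σ * a' * (h₁ * σ) + σ * h₀ * (a * σ) := by rw [e₁]; noncomm_ring

lemma exists_eq_X_sub_C_mul_add_C_of_intertwine {n : M} {f g : M[X]}
    (h : f * (Polynomial.X - Polynomial.C n) = (Polynomial.X - Polynomial.C n) * g) :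
    ∃ (q : M[X]) (m : M), Commute n m ∧
      f = (Polynomial.X - Polynomial.C n) * q + Polynomial.C m ∧
      g = q * (Polynomial.X - Polynomial.C n) + Polynomial.C m := by
  rcases subsingleton_or_nontrivial M with _ | _
  · exact ⟨0, 0, Commute.zero_right n, Subsingleton.elim _ _, Subsingleton.elim _ _⟩
  set d : M[X] := Polynomial.X - Polynomial.C n with hd
  have hmonic : d.Monic := Polynomial.monic_X_sub_C n
  have hdeg : d.degree = 1 := Polynomial.degree_X_sub_C n
  obtain ⟨m, hm⟩ : ∃ m, f %ₘ d = Polynomial.C m :=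
    ⟨_, Polynomial.eq_C_of_degree_le_zero <| Nat.WithBot.lt_one_iff_le_zero.mp <|
      hdeg ▸ Polynomial.degree_modByMonic_lt f hmonic⟩
  have hf : f = d * (f /ₘ d) + Polynomial.C m := by
    rw [← hm, add_comm, Polynomial.modByMonic_add_div]
  set q := f /ₘ d
  have hcomm : 0 + d * (g - q * d - Polynomial.C m) = Polynomial.C (n * m - m * n) := by
    have hX : Polynomial.C m * d = d * Polynomial.C m + Polynomial.C (n * m - m * n) := by
      rw [hd, Polynomial.C_sub, Polynomial.C_mul, Polynomial.C_mul, sub_mul, mul_sub,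
        Polynomial.X_mul_C]
      abel
    have hm : Polynomial.C m * d = d * (g - q * d) := by
      rw [mul_sub d, ← h, ← mul_assoc, ← sub_mul, eq_sub_of_add_eq' hf.symm]
    rw [mul_sub d, ← hm, hX]; abel
  have hquot : g - q * d - Polynomial.C m = 0 ∧ (0 : M[X]) = Polynomial.C (n * m - m * n) := by
    have hdiv := Polynomial.div_modByMonic_unique _ _ hmonic ⟨hcomm, by simp [hdeg]⟩
    have hself := Polynomial.div_modByMonic_unique 0 (Polynomial.C (n * m - m * n)) hmonic
      ⟨by rw [mul_zero, add_zero], hdeg ▸ Polynomial.degree_C_lt⟩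
    exact ⟨hdiv.1.symm.trans hself.1, hdiv.2.symm.trans hself.2⟩
  refine ⟨q, m, ?_, hf, ?_⟩
  · exact sub_eq_zero.mp (Polynomial.C_eq_zero.mp hquot.2.symm)
  · rw [← sub_eq_zero, ← hquot.1]; abel

end NullHomotopic

section Matrices

variable {R : Type*} [CommRing R]

lemma isNullHomotopic_smul [Invertible (2 : R)] {M : Type*} [Ring M] [Algebra R M] (k : R)
    (n z : M) : IsNullHomotopic (n - z) (n + z) (k • n) (k • n) := by
  have halves : ⅟2 * k + k * ⅟2 = k := by rw [mul_comm, ← mul_add, invOf_two_add_invOf_two, mul_one]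
  refine ⟨(⅟2 * k) • 1, (k * ⅟2) • 1, ?_, ?_⟩ <;>
  · nth_rw 1 [← halves]
    simp only [mul_smul_comm, smul_mul_assoc, mul_one, one_mul]
    module

lemma exists_commute_isNullHomotopic {ι : Type*} [Fintype ι] [DecidableEq ι] {v : R}
    {expand : R →+* R[X]} (hv : expand v = Polynomial.X)
    (heval : ∀ r, (expand r).eval v = r) {n : Matrix ι ι R}
    (hn : n.map expand = n.map Polynomial.C) {f₀ f₁ : Matrix ι ι R}
    (hf : f₀ * (n - v • 1) = (n - v • 1) * f₁) :
    ∃ m, Commute n m ∧ IsNullHomotopic (n - v • 1) (n + v • 1) (f₀ - m) (f₁ - m) := by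
  let toPoly : Matrix ι ι R →+* (Matrix ι ι R)[X] :=
    (matPolyEquiv : Matrix ι ι R[X] ≃ₐ[R] _).toRingEquiv.toRingHom.comp expand.mapMatrix
  let eval : (Matrix ι ι R)[X] →+* Matrix ι ι R :=
    Polynomial.eval₂RingHom' (RingHom.id _) (Matrix.scalar ι v)
      fun a => (Matrix.scalar_commute v (Commute.all v) a).symm
  have eval_toPoly (a : Matrix ι ι R) : eval (toPoly a) = a := by
    refine (matPolyEquiv_eval_eq_map _ v).trans ?_
    ext i j
    exact heval (a i j)
  have toPoly_sub : toPoly (v • 1 - n) = Polynomial.X - Polynomial.C n := by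
    have hv1 : (v • (1 : Matrix ι ι R)).map expand = Matrix.diagonal fun _ => Polynomial.X := by
      rw [Matrix.smul_one_eq_diagonal, Matrix.diagonal_map (map_zero expand)]
      exact congrArg Matrix.diagonal (funext fun _ => hv)
    have hn' : toPoly n = Polynomial.C n := (congrArg matPolyEquiv hn).trans (matPolyEquiv_map_C n)
    have hv' : toPoly (v • 1) = Polynomial.X :=
      (congrArg matPolyEquiv hv1).trans matPolyEquiv_diagonal_X
    rw [map_sub, hn', hv']
  have hpoly : toPoly f₀ * (Polynomial.X - Polynomial.C n) =
      (Polynomial.X - Polynomial.C n) * toPoly f₁ := by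
    rw [← toPoly_sub, ← map_mul, ← map_mul, ← neg_sub, mul_neg, hf, neg_mul]
  obtain ⟨q, m, hm, h₀, h₁⟩ := exists_eq_X_sub_C_mul_add_C_of_intertwine hpoly
  have eval_sub : eval (Polynomial.X - Polynomial.C n) = v • 1 - n := by
    rw [← toPoly_sub, eval_toPoly]
  have eval_C : eval (Polynomial.C m) = m := Polynomial.eval₂_C _ _
  refine ⟨m, hm, -eval q, 0, ?_, ?_⟩
  · rw [← eval_toPoly f₀, h₀, map_add, map_mul, eval_sub, eval_C, zero_mul, add_sub_cancel_right,
      mul_neg, ← neg_mul, neg_sub, add_zero]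
  · rw [← eval_toPoly f₁, h₁, map_add, map_mul, eval_sub, eval_C, mul_zero, add_sub_cancel_right,
      neg_mul, ← mul_neg, neg_sub, zero_add]

lemma exists_eq_smul_one_add_smul_of_commute [Invertible (2 : R)] {p b c : R} (hb : IsRegular b)
    (hbp : ∀ q, b ∣ p * q → b ∣ q) {m : Matrix (Fin 2) (Fin 2) R}
    (hm : Commute !![p, -b; c, -p] m) : ∃ r k : R, m = r • 1 + k • !![p, -b; c, -p] := by
  have h00 : p * m 0 0 - b * m 1 0 = m 0 0 * p + m 0 1 * c := by
    simpa [Matrix.mul_apply, sub_eq_add_neg] using congr($hm 0 0)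
  have h01 : p * m 0 1 - b * m 1 1 = -(m 0 0 * b) - m 0 1 * p := by
    simpa [Matrix.mul_apply, sub_eq_add_neg] using congr($hm 0 1)
  obtain ⟨k, hk⟩ : b ∣ m 0 1 := hbp _ ⟨⅟2 * (m 1 1 - m 0 0), by
    linear_combination ⅟2 * h01 - p * m 0 1 * mul_invOf_self (2 : R)⟩
  have h10 : m 1 0 = -c * k := hb.left <| by
    linear_combination -h00 - c * hk
  have h11 : m 1 1 = m 0 0 + 2 * p * k := hb.left <| by
    linear_combination -h01 + 2 * p * hk
  refine ⟨m 0 0 + k * p, -k, ?_⟩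
  ext i j
  fin_cases i <;> fin_cases j <;> simp [hk, h10, h11] <;> ring


lemma exists_isNullHomotopic_sub_smul_one [Invertible (2 : R)] {p b c v : R}
    {expand : R →+* R[X]} (hv : expand v = Polynomial.X) (heval : ∀ r, (expand r).eval v = r)
    (hp : expand p = Polynomial.C p) (hb : expand b = Polynomial.C b)
    (hc : expand c = Polynomial.C c) (hreg : IsRegular b) (hbp : ∀ q, b ∣ p * q → b ∣ q)
    {A f₀ f₁ : Matrix (Fin 2) (Fin 2) R} (hA : A = !![p - v, b; c, p + v])
    (hf : f₀ * A = A * f₁) :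
    ∃ r : R, IsNullHomotopic A A.adjugate (f₀ - r • 1) (f₁ - r • 1) := by
  set n : Matrix (Fin 2) (Fin 2) R := !![p, -b; c, -p] with hn
  let σ : Matrix (Fin 2) (Fin 2) R := !![1, 0; 0, -1]
  have hσ : σ * σ = 1 := by simp [σ, Matrix.one_fin_two]
  have hmul : A = (n - v • 1) * σ := by
    simp [hA, hn, σ, Matrix.one_fin_two, sub_eq_add_neg, add_comm]
  have hadj : A.adjugate = σ * (n + v • 1) := by
    simp [hA, hn, σ, Matrix.one_fin_two, Matrix.adjugate_fin_two, sub_eq_add_neg, add_comm]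
  have hexpand : n.map expand = n.map Polynomial.C := by
    ext1 i j
    fin_cases i <;> fin_cases j <;> simp [hn, hp, hb, hc]
  have hf' : f₀ * (n - v • 1) = (n - v • 1) * (σ * f₁ * σ) := by
    calc f₀ * (n - v • 1) = f₀ * A * σ := by rw [hmul, mul_assoc, mul_assoc, hσ, mul_one]
      _ = (n - v • 1) * (σ * f₁ * σ) := by rw [hf, hmul]; simp only [mul_assoc]
  obtain ⟨m, hm, hnull⟩ := exists_commute_isNullHomotopic hv heval hexpand hf'
  obtain ⟨r, k, rfl⟩ := exists_eq_smul_one_add_smul_of_commute hreg hbp hm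
  refine ⟨r, ?_⟩
  rw [hadj, hmul]
  refine IsNullHomotopic.mul_involution hσ ?_
  convert hnull.add (isNullHomotopic_smul k n (v • 1)) using 1
  · abel
  · rw [mul_sub, sub_mul, mul_smul_comm, smul_mul_assoc, mul_one, hσ]
    abel

end Matrices

section EntryIdeal

variable {R : Type*} [CommRing R]

/-- The ideal generated by the entries of a matrix. -/
def entryIdeal {m n : Type*} (A : Matrix m n R) : Ideal R :=
  Ideal.span (Set.range fun ij : m × n => A ij.1 ij.2)

lemma mem_entryIdeal {m n : Type*} (A : Matrix m n R) (i : m) (j : n) : A i j ∈ entryIdeal A :=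
  Ideal.subset_span ⟨(i, j), rfl⟩

lemma entryIdeal_sub_add [Invertible (2 : R)] (p v b c : R) :
    entryIdeal !![p - v, b; c, p + v] = Ideal.span {v, p, b, c} := by
  set A := !![p - v, b; c, p + v] with hA
  have hdiff : p - v ∈ entryIdeal A := mem_entryIdeal A 0 0
  have hsum : p + v ∈ entryIdeal A := mem_entryIdeal A 1 1
  apply le_antisymm <;> refine Ideal.span_le.mpr ?_
  · have hv : v ∈ Ideal.span {v, p, b, c} := Ideal.subset_span (by simp)
    have hp : p ∈ Ideal.span {v, p, b, c} := Ideal.subset_span (by simp)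
    rintro _ ⟨⟨i, j⟩, rfl⟩
    fin_cases i <;> fin_cases j
    · exact sub_mem hp hv
    · exact Ideal.subset_span (by simp [hA])
    · exact Ideal.subset_span (by simp [hA])
    · exact add_mem hp hv
  · have half {r : R} (h : 2 * r ∈ entryIdeal A) : r ∈ entryIdeal A := by
      simpa using Ideal.mul_mem_left _ (⅟2) h
    have hp : p ∈ entryIdeal A :=
      half ((by ring : 2 * p = p - v + (p + v)) ▸ add_mem hdiff hsum)
    have hv : v ∈ entryIdeal A :=
      half ((by ring : 2 * v = p + v - (p - v)) ▸ sub_mem hsum hdiff)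
    rintro r (rfl | rfl | rfl | rfl)
    exacts [hv, hp, mem_entryIdeal A 0 1, mem_entryIdeal A 1 0]

lemma mul_apply_mem_entryIdeal {l m n : Type*} [Fintype m] (A : Matrix l m R) (h : Matrix m n R)
    (i : l) (j : n) : (A * h) i j ∈ entryIdeal A :=
  Ideal.sum_mem _ fun k _ => Ideal.mul_mem_right _ _ (mem_entryIdeal A i k)

lemma exists_trace_mul_eq_of_mem_entryIdeal {m n : Type*} [Fintype m] [Fintype n]
    {A : Matrix m n R} {r : R} (hr : r ∈ entryIdeal A) : ∃ h : Matrix n m R, (A * h).trace = r := by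
  classical
  let f : Matrix n m R →ₗ[R] R := Matrix.traceLinearMap m R R ∘ₗ mulLeftLinearMap m R A
  suffices entryIdeal A ≤ LinearMap.range f from this hr
  refine Ideal.span_le.mpr ?_
  rintro _ ⟨⟨i, j⟩, rfl⟩
  exact ⟨Matrix.single j i 1, by simp [f, Matrix.trace_mul_single]⟩

lemma add_adjugate_fin_two (A : Matrix (Fin 2) (Fin 2) R) : A + A.adjugate = A.trace • 1 := by
  rw [A.eta_fin_two]
  simp [Matrix.adjugate_fin_two, Matrix.trace_fin_two, Matrix.one_fin_two, add_comm]

lemma isNullHomotopic_smul_one_of_mem_entryIdeal {A : Matrix (Fin 2) (Fin 2) R} {r : R}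
    (hr : r ∈ entryIdeal A) : IsNullHomotopic A A.adjugate (r • 1) (r • 1) := by
  obtain ⟨h, rfl⟩ := exists_trace_mul_eq_of_mem_entryIdeal hr
  refine ⟨h, h.adjugate, ?_, ?_⟩
  · rw [← add_adjugate_fin_two, Matrix.adjugate_mul_distrib]
  · rw [Matrix.trace_mul_comm, ← add_adjugate_fin_two, Matrix.adjugate_mul_distrib, add_comm]

lemma IsNullHomotopic.apply_mem_entryIdeal {A f₀ f₁ : Matrix (Fin 2) (Fin 2) R}
    (hf : IsNullHomotopic A A.adjugate f₀ f₁) (i j : Fin 2) : f₀ i j ∈ entryIdeal A := by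
  obtain ⟨h₀, h₁, rfl, -⟩ := hf
  have hle : ∀ i j, A.adjugate i j ∈ entryIdeal A := by
    intro i j
    rw [Matrix.adjugate_fin_two]
    fin_cases i <;> fin_cases j <;> simp [mem_entryIdeal]
  exact add_mem (mul_apply_mem_entryIdeal A h₀ i j) <| Matrix.mul_apply (M := h₁) ▸
    (Ideal.sum_mem _ fun k _ => Ideal.mul_mem_left _ _ (hle k j))

end EntryIdeal

section EvenEnd

/-- The twisted differential of the matrix factorisation `(adj A, A)` of `det A`. -/
def twistedDifferential (A : Matrix (Fin 2) (Fin 2) R4) :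
    Matrix (Fin 2 ⊕ Fin 2) (Fin 2 ⊕ Fin 2) R4 :=
  Matrix.fromBlocks 0 A A.adjugate 0

variable {A f₀ f₁ : Matrix (Fin 2) (Fin 2) R4}

lemma exists_eq_fromBlocks_of_mem_EvenEnd {F : Matrix (Fin 2 ⊕ Fin 2) (Fin 2 ⊕ Fin 2) R4}
    (hF : F ∈ EvenEnd (twistedDifferential A)) :
    ∃ f₀ f₁, F = Matrix.fromBlocks f₀ 0 0 f₁ ∧ f₀ * A = A * f₁ := by
  obtain ⟨h₁₂, h₂₁, hcomm⟩ := hF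
  have hF : F = Matrix.fromBlocks F.toBlocks₁₁ 0 0 F.toBlocks₂₂ := by
    conv_lhs => rw [← F.fromBlocks_toBlocks, h₁₂, h₂₁]
  refine ⟨_, _, hF, ?_⟩
  rw [hF, twistedDifferential, Matrix.fromBlocks_multiply, Matrix.fromBlocks_multiply,
    Matrix.fromBlocks_inj] at hcomm
  simpa using hcomm.2.1.symm

lemma smul_one_mem_EvenEnd (D : Matrix (Fin 2 ⊕ Fin 2) (Fin 2 ⊕ Fin 2) R4) (r : R4) :
    r • 1 ∈ EvenEnd D := by
  refine ⟨?_, ?_, by rw [mul_smul_comm, smul_mul_assoc, mul_one, one_mul]⟩ <;>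
  · rw [← Matrix.fromBlocks_one, Matrix.fromBlocks_smul, smul_zero]
    rfl

lemma fromBlocks_mem_NullHtpy_iff :
    Matrix.fromBlocks f₀ 0 0 f₁ ∈ NullHtpy (twistedDifferential A) ↔
      IsNullHomotopic A A.adjugate f₀ f₁ := by
  have hD (h₀ h₁ : Matrix (Fin 2) (Fin 2) R4) :
      twistedDifferential A * Matrix.fromBlocks 0 h₁ h₀ 0 +
        Matrix.fromBlocks 0 h₁ h₀ 0 * twistedDifferential A =
      Matrix.fromBlocks (A * h₀ + h₁ * A.adjugate) 0 0 (A.adjugate * h₁ + h₀ * A) := by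
    simp [twistedDifferential, Matrix.fromBlocks_multiply, Matrix.fromBlocks_add]
  constructor
  · rintro ⟨H, h₁₁, h₂₂, hF⟩
    rw [← H.fromBlocks_toBlocks, h₁₁, h₂₂, hD, Matrix.fromBlocks_inj] at hF
    exact ⟨_, _, hF.1, hF.2.2.2⟩
  · rintro ⟨h₀, h₁, rfl, rfl⟩
    exact ⟨_, Matrix.toBlocks_fromBlocks₁₁ .., Matrix.toBlocks_fromBlocks₂₂ .., (hD h₀ h₁).symm⟩

/-- The class of the upper left entry of an even endomorphism modulo the entries of `A`: a
complete homotopy invariant as soon as every even endomorphism is a scalar up to homotopy. -/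
def cornerClass (A : Matrix (Fin 2) (Fin 2) R4) :
    EvenEnd (twistedDifferential A) →ₗ[ℂ] R4 ⧸ entryIdeal A :=
  (Ideal.Quotient.mkₐ ℂ (entryIdeal A)).toLinearMap ∘ₗ
    Matrix.entryLinearMap ℂ R4 (Sum.inl 0) (Sum.inl 0) ∘ₗ
    (EvenEnd (twistedDifferential A)).subtype

lemma cornerClass_eq_zero_iff {F : EvenEnd (twistedDifferential A)} :
    cornerClass A F = 0 ↔ F.1 (Sum.inl 0) (Sum.inl 0) ∈ entryIdeal A :=
  Ideal.Quotient.eq_zero_iff_mem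

lemma cornerClass_surjective : Function.Surjective (cornerClass A) := by
  intro q
  obtain ⟨r, rfl⟩ := Ideal.Quotient.mk_surjective q
  refine ⟨⟨r • 1, smul_one_mem_EvenEnd _ r⟩, congrArg (Ideal.Quotient.mk _) ?_⟩
  simp

lemma ker_cornerClass
    (hA : ∀ f₀ f₁, f₀ * A = A * f₁ → ∃ r : R4, IsNullHomotopic A A.adjugate (f₀ - r • 1)
      (f₁ - r • 1)) :
    LinearMap.ker (cornerClass A) = Submodule.comap (EvenEnd (twistedDifferential A)).subtype
      (NullHtpy (twistedDifferential A)) := by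
  ext ⟨F, hF⟩
  obtain ⟨f₀, f₁, rfl, hcomm⟩ := exists_eq_fromBlocks_of_mem_EvenEnd hF
  rw [LinearMap.mem_ker, cornerClass_eq_zero_iff, Submodule.mem_comap, Submodule.subtype_apply,
    fromBlocks_mem_NullHtpy_iff]
  change f₀ 0 0 ∈ entryIdeal A ↔ _
  refine ⟨fun h => ?_, fun h => h.apply_mem_entryIdeal 0 0⟩
  obtain ⟨r, hr⟩ := hA f₀ f₁ hcomm
  have hrA : r ∈ entryIdeal A := by simpa using sub_mem h (hr.apply_mem_entryIdeal 0 0)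
  simpa using hr.add (isNullHomotopic_smul_one_of_mem_entryIdeal hrA)

theorem finrank_EvenEnd_quotient_NullHtpy
    (hA : ∀ f₀ f₁, f₀ * A = A * f₁ → ∃ r : R4, IsNullHomotopic A A.adjugate (f₀ - r • 1)
      (f₁ - r • 1)) :
    Module.finrank ℂ (EvenEnd (twistedDifferential A) ⧸
      Submodule.comap (EvenEnd (twistedDifferential A)).subtype
        (NullHtpy (twistedDifferential A))) = Module.finrank ℂ (R4 ⧸ entryIdeal A) :=
  (Submodule.quotEquivOfEq _ _ (ker_cornerClass hA).symm ≪≫ₗ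
    (cornerClass A).quotKerEquivOfSurjective cornerClass_surjective).finrank_eq

end EvenEnd

section Substitution

variable {σ R : Type*} [CommRing R] [DecidableEq σ]

lemma X_sub_dvd_sub_aeval_update (i : σ) (g r : MvPolynomial σ R) :
    X i - g ∣ r - aeval (Function.update X i g) r := by
  rw [← Ideal.mem_span_singleton, ← Ideal.Quotient.eq]
  have hom_eq : Ideal.Quotient.mkₐ R (Ideal.span {X i - g}) =
      (Ideal.Quotient.mkₐ R (Ideal.span {X i - g})).comp (aeval (Function.update X i g)) := by
    ext j
    rcases eq_or_ne j i with rfl | hj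
    · simpa using Ideal.Quotient.eq.mpr (Ideal.mem_span_singleton_self (X j - g))
    · simp [hj]
  exact congr($hom_eq r)

lemma X_sub_dvd_of_dvd_mul [IsDomain R] {i : σ} {g p q : MvPolynomial σ R}
    (hg : aeval (Function.update X i g) g = g) (hp : aeval (Function.update X i g) p ≠ 0)
    (h : X i - g ∣ p * q) : X i - g ∣ q := by
  have hroot : aeval (Function.update X i g) (X i - g) = 0 := by
    rw [map_sub, aeval_X, Function.update_self, hg, sub_self]
  have hmul := map_dvd (aeval (Function.update X i g)) h
  rw [hroot, zero_dvd_iff, map_mul] at hmul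
  have hq := X_sub_dvd_sub_aeval_update i g q
  rwa [(mul_eq_zero.mp hmul).resolve_left hp, sub_zero] at hq

end Substitution

section E6

/-- The part of the diagonal entries of `dE6 s t` which is free of `v`. -/
def diagE6 (s t : ℂ) : R4 :=
  y ^ 2 + C (1 / 2 : ℂ) * x * (C s * u) ^ 2 + C ((2 * t + 1) / 8) * (C s * u) ^ 6

lemma dE6_eq (s t : ℂ) :
    dE6 s t = !![diagE6 s t - v, dE6 s t 0 1; dE6 s t 1 0, diagE6 s t + v] := by
  ext1 i j
  fin_cases i <;> fin_cases j <;> simp [dE6, diagE6] <;> ring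

/-- The expansion of a polynomial in `ℂ[u,v,x,y]` in powers of `v`. -/
def expandV : R4 →ₐ[ℂ] R4[X] :=
  aeval ![Polynomial.C u, Polynomial.X, Polynomial.C x, Polynomial.C y]

lemma expandV_v : expandV v = Polynomial.X := by simp [expandV, v]

lemma eval_expandV (r : R4) : (expandV r).eval v = r := by
  have hom_eq : ((Polynomial.aeval v).restrictScalars ℂ).comp expandV = AlgHom.id ℂ R4 := by
    ext1 i
    fin_cases i <;> simp [expandV, u, v, x, y]
  exact congr($hom_eq r)

lemma expandV_C (a : ℂ) : expandV (C a) = Polynomial.C (C a) := expandV.commutes a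

lemma expandV_u : expandV u = Polynomial.C u := by simp [expandV, u]

lemma expandV_x : expandV x = Polynomial.C x := by simp [expandV, x]

lemma expandV_y : expandV y = Polynomial.C y := by simp [expandV, y]

lemma expandV_diagE6 (s t : ℂ) : expandV (diagE6 s t) = Polynomial.C (diagE6 s t) := by
  simp only [diagE6, map_add, map_mul, map_pow, expandV_C, expandV_u, expandV_x, expandV_y]

lemma expandV_dE6_zero_one (s t : ℂ) : expandV (dE6 s t 0 1) = Polynomial.C (dE6 s t 0 1) := by
  simp [dE6, expandV_u, expandV_x, expandV_y]

lemma expandV_dE6_one_zero (s t : ℂ) : expandV (dE6 s t 1 0) = Polynomial.C (dE6 s t 1 0) := by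
  simp [dE6, expandV_u, expandV_x, expandV_y]

lemma isRegular_dE6_zero_one (s t : ℂ) : IsRegular (dE6 s t 0 1) := by
  refine IsRegular.of_ne_zero fun h => ?_
  simpa [dE6, u, x, y] using congrArg (eval ![0, 0, 1, 0]) h

lemma dE6_zero_one_dvd_of_dvd_mul {s t : ℂ} {q : R4} (h : dE6 s t 0 1 ∣ diagE6 s t * q) :
    dE6 s t 0 1 ∣ q := by
  set g : R4 := y * (C s * u) + C ((t + 1) / 4) * (C s * u) ^ 4 with hg
  have hb : dE6 s t 0 1 = -(X 2 - g) := by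
    simp only [dE6, hg, x, Matrix.of_apply, Matrix.cons_val', Matrix.cons_val_zero,
      Matrix.cons_val_one, Matrix.cons_val_fin_one]
    ring
  rw [hb, neg_dvd] at h ⊢
  refine X_sub_dvd_of_dvd_mul ?_ (fun h0 => ?_) h
  · simp [hg, u, y]
  · simpa [diagE6, hg, u, x, y] using congrArg (eval ![0, 0, 0, 1]) h0

instance : Invertible (2 : R4) := (Invertible.map (C : ℂ →+* R4) 2).copy _ (map_ofNat C 2).symm

theorem exists_isNullHomotopic_dE6_sub_smul_one {s t : ℂ} {f₀ f₁ : Matrix (Fin 2) (Fin 2) R4}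
    (hf : f₀ * dE6 s t = dE6 s t * f₁) :
    ∃ r : R4, IsNullHomotopic (dE6 s t) (dE6 s t).adjugate (f₀ - r • 1) (f₁ - r • 1) :=
  exists_isNullHomotopic_sub_smul_one (expand := expandV.toRingHom) expandV_v eval_expandV
    (expandV_diagE6 s t) (expandV_dE6_zero_one s t) (expandV_dE6_one_zero s t)
    (isRegular_dE6_zero_one s t) (fun _ => dE6_zero_one_dvd_of_dvd_mul) (dE6_eq s t) hf

end E6

section Quadratic

variable {A : Type*} [CommRing A] {P : A[X]}

lemma dvd_coeff_modByMonic_of_mem_span_pair (hP : P.Monic) {r : A} {F : A[X]}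
    (hF : F ∈ Ideal.span {P, Polynomial.C r * Polynomial.X}) :
    r * P.coeff 0 ∣ (F %ₘ P).coeff 0 ∧ r ∣ (F %ₘ P).coeff 1 := by
  obtain ⟨a, b, rfl⟩ := Ideal.mem_span_pair.mp hF
  have hmod : (a * P + b * (Polynomial.C r * Polynomial.X)) %ₘ P =
      r • ((b * Polynomial.X) %ₘ P) := by
    rw [Polynomial.add_modByMonic, Polynomial.mul_self_modByMonic hP, zero_add,
      ← Polynomial.smul_modByMonic, Polynomial.smul_eq_C_mul, mul_left_comm]
  have hconst : P.coeff 0 ∣ ((b * Polynomial.X) %ₘ P).coeff 0 := by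
    refine ⟨-((b * Polynomial.X) /ₘ P).coeff 0, ?_⟩
    have h := congrArg (Polynomial.coeff · 0) (Polynomial.modByMonic_add_div (b * Polynomial.X) P)
    simp only [Polynomial.coeff_add, Polynomial.mul_coeff_zero, Polynomial.coeff_X_zero] at h
    linear_combination h
  rw [hmod, Polynomial.coeff_smul, Polynomial.coeff_smul, smul_eq_mul, smul_eq_mul]
  exact ⟨mul_dvd_mul_left r hconst, dvd_mul_right r _⟩

lemma mem_span_pair_of_dvd_coeff_modByMonic (hP : P.Monic) (hdeg : P.natDegree = 2) {r : A}
    {F : A[X]} (h₀ : r * P.coeff 0 ∣ (F %ₘ P).coeff 0) (h₁ : r ∣ (F %ₘ P).coeff 1) :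
    F ∈ Ideal.span {P, Polynomial.C r * Polynomial.X} := by
  obtain ⟨k, hk⟩ := h₀
  obtain ⟨l, hl⟩ := h₁
  have hquad : P = Polynomial.X ^ 2 + Polynomial.C (P.coeff 1) * Polynomial.X +
      Polynomial.C (P.coeff 0) := by
    conv_lhs => rw [hP.as_sum, hdeg, Finset.sum_range_succ, Finset.sum_range_one]
    ring
  have hlin : F %ₘ P = Polynomial.C r * Polynomial.C l * Polynomial.X +
      Polynomial.C r * Polynomial.C (P.coeff 0) * Polynomial.C k := by
    have hlt : (F %ₘ P).natDegree < 2 :=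
      (Polynomial.natDegree_modByMonic_lt F hP fun h => by simp [h] at hdeg).trans_eq hdeg
    rw [← Polynomial.C_mul, ← Polynomial.C_mul, ← Polynomial.C_mul, ← hk, ← hl]
    exact Polynomial.eq_X_add_C_of_natDegree_le_one (Nat.lt_succ_iff.mp hlt)
  refine Ideal.mem_span_pair.mpr ⟨F /ₘ P + Polynomial.C r * Polynomial.C k,
    Polynomial.C l - Polynomial.C k * (Polynomial.X + Polynomial.C (P.coeff 1)), ?_⟩
  linear_combination Polynomial.modByMonic_add_div F P - hlin +
    Polynomial.C r * Polynomial.C k * hquad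

/-- The two coefficients of the remainder of division by a monic quadratic polynomial `P`, as
classes modulo the two ideals which the multiples of `r • X` fill up. -/
def remainderClass (P : A[X]) (r : A) :
    A[X] →ₗ[A] (A ⧸ Ideal.span {r * P.coeff 0}) × (A ⧸ Ideal.span {r}) :=
  (((Ideal.span {r * P.coeff 0}).mkQ ∘ₗ Polynomial.lcoeff A 0).prod
    ((Ideal.span {r}).mkQ ∘ₗ Polynomial.lcoeff A 1)) ∘ₗ Polynomial.modByMonicHom P

lemma ker_remainderClass (hP : P.Monic) (hdeg : P.natDegree = 2) (r : A) :
    LinearMap.ker (remainderClass P r) =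
      (Ideal.span {P, Polynomial.C r * Polynomial.X}).restrictScalars A := by
  ext F
  have hmem : F ∈ Ideal.span {P, Polynomial.C r * Polynomial.X} ↔
      r * P.coeff 0 ∣ (F %ₘ P).coeff 0 ∧ r ∣ (F %ₘ P).coeff 1 :=
    ⟨dvd_coeff_modByMonic_of_mem_span_pair hP,
      fun h => mem_span_pair_of_dvd_coeff_modByMonic hP hdeg h.1 h.2⟩
  simp [remainderClass, hmem, Ideal.Quotient.eq_zero_iff_dvd]

lemma remainderClass_surjective (hP : P.Monic) (hdeg : P.natDegree = 2) (r : A) :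
    Function.Surjective (remainderClass P r) := by
  rintro ⟨a, b⟩
  obtain ⟨a, rfl⟩ := Submodule.mkQ_surjective _ a
  obtain ⟨b, rfl⟩ := Submodule.mkQ_surjective _ b
  refine ⟨Polynomial.C b * Polynomial.X + Polynomial.C a, ?_⟩
  have hmod : (Polynomial.C b * Polynomial.X + Polynomial.C a) %ₘ P =
      Polynomial.C b * Polynomial.X + Polynomial.C a := by
    nontriviality A
    refine (Polynomial.modByMonic_eq_self_iff hP).mpr (Polynomial.degree_linear_le.trans_lt ?_)
    rw [Polynomial.degree_eq_natDegree hP.ne_zero, hdeg]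
    exact Nat.one_lt_ofNat
  simp [remainderClass, hmod]

/-- The quotient of the rank two free `A`-algebra `A[X] ⧸ (P)` by the multiples of `r • X`. -/
def quotientSpanPairEquiv (hP : P.Monic) (hdeg : P.natDegree = 2) (r : A) :
    (A[X] ⧸ Ideal.span {P, Polynomial.C r * Polynomial.X}) ≃ₗ[A]
      (A ⧸ Ideal.span {r * P.coeff 0}) × (A ⧸ Ideal.span {r}) :=
  (Submodule.Quotient.restrictScalarsEquiv A _).symm ≪≫ₗ
    Submodule.quotEquivOfEq _ _ (ker_remainderClass hP hdeg r).symm ≪≫ₗ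
    (remainderClass P r).quotKerEquivOfSurjective (remainderClass_surjective hP hdeg r)

theorem finrank_quotient_span_pair_monic_C_mul_X {K : Type*} [Field K] {P : K[X][X]}
    (hP : P.Monic) (hdeg : P.natDegree = 2) {r : K[X]} (hr : r ≠ 0) (h₀ : P.coeff 0 ≠ 0) :
    Module.finrank K (K[X][X] ⧸ Ideal.span {P, Polynomial.C r * Polynomial.X}) =
      (P.coeff 0).natDegree + 2 * r.natDegree := by
  have finite {f : K[X]} (hf : f ≠ 0) : Module.Finite K (K[X] ⧸ Ideal.span {f}) :=
    (AdjoinRoot.powerBasis hf).finite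
  have := finite hr
  have := finite (mul_ne_zero hr h₀)
  rw [((quotientSpanPairEquiv hP hdeg r).restrictScalars K).finrank_eq, Module.finrank_prod,
    finrank_quotient_span_eq_natDegree, finrank_quotient_span_eq_natDegree,
    Polynomial.natDegree_mul hr h₀]
  ring

end Quadratic

section EntryQuotient

lemma entryIdeal_dE6 (s t : ℂ) :
    entryIdeal (dE6 s t) = Ideal.span {v, diagE6 s t, dE6 s t 0 1, dE6 s t 1 0} :=
  (congrArg entryIdeal (dE6_eq s t)).trans (entryIdeal_sub_add _ _ _ _)

/-- The relation on `y₀ = y - (t + 1 / 2) w ^ 3` over `ℂ[w]`, `w = s u`, to which `diagE6 s t`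
reduces when `x` is eliminated by `dE6 s t 0 1 = 0`. In `ℂ[X][X]` the inner variable is `w` and the
outer one is `y₀`, chosen such that `dE6 s t 1 0` reduces to a multiple of it. -/
def quadE6 (t : ℂ) : ℂ[X][X] :=
  Polynomial.X ^ 2 + Polynomial.C (Polynomial.C (2 * t + 3 / 2) * Polynomial.X ^ 3) * Polynomial.X +
    Polynomial.C (Polynomial.C (13 / 12 + 15 / 8 * t) * Polynomial.X ^ 6)

/-- The factor `r` such that `dE6 s t 1 0` reduces to `r y₀` modulo `quadE6 t`. -/
def slopeE6 (t : ℂ) : ℂ[X] := Polynomial.C (3 / 2 * t) * Polynomial.X ^ 5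

lemma quadE6_monic (t : ℂ) : (quadE6 t).Monic := by
  unfold quadE6; monicity!

lemma natDegree_quadE6 (t : ℂ) : (quadE6 t).natDegree = 2 := by
  unfold quadE6; compute_degree!

lemma coeff_zero_quadE6 (t : ℂ) :
    (quadE6 t).coeff 0 = Polynomial.C (13 / 12 + 15 / 8 * t) * Polynomial.X ^ 6 := by
  simp only [quadE6, Polynomial.coeff_add, Polynomial.mul_coeff_zero, Polynomial.coeff_X_zero,
    Polynomial.coeff_C_zero, pow_two, mul_zero, zero_add]

/-- The substitution of `w = s u` and `y₀ = y - (t + 1 / 2) w ^ 3` for the variables. -/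
def toR4 (s t : ℂ) : ℂ[X][X] →ₐ[ℂ] R4 :=
  Polynomial.aevalAeval (C s * u) (y - C (t + 1 / 2) * (C s * u) ^ 3)

lemma toR4_X (s t : ℂ) : toR4 s t Polynomial.X = y - C (t + 1 / 2) * (C s * u) ^ 3 :=
  Polynomial.aevalAeval_Y _ _

lemma toR4_C_X (s t : ℂ) : toR4 s t (Polynomial.C Polynomial.X) = C s * u :=
  Polynomial.aevalAeval_X _ _

lemma toR4_C_C (s t a : ℂ) : toR4 s t (Polynomial.C (Polynomial.C a)) = C a :=
  (toR4 s t).commutes a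

lemma toR4_quadE6 (s : ℂ) {t : ℂ} (ht : t ^ 2 = 1 / 3) :
    toR4 s t (quadE6 t) = diagE6 s t + C (1 / 2) * (C s * u) ^ 2 * dE6 s t 0 1 := by
  apply MvPolynomial.funext
  intro z
  simp only [quadE6, map_add, map_mul, map_pow, map_sub, map_neg, toR4_X, toR4_C_X, toR4_C_C,
    diagE6, dE6, u, x, y, eval_X, eval_C, Matrix.of_apply, Matrix.cons_val', Matrix.cons_val_one,
    Matrix.cons_val_fin_one, Matrix.cons_val_zero]
  linear_combination -(s * z 0) ^ 6 * ht

lemma toR4_C_slopeE6_mul_X (s : ℂ) {t : ℂ} (ht : t ^ 2 = 1 / 3) :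
    toR4 s t (Polynomial.C (slopeE6 t) * Polynomial.X) =
      dE6 s t 1 0 - 2 * (C s * u) ^ 2 * toR4 s t (quadE6 t) +
        dE6 s t 0 1 * (x + 2 * y * (C s * u) + C (t / 2 + 1 / 4) * (C s * u) ^ 4) := by
  rw [toR4_quadE6 s ht]
  apply MvPolynomial.funext
  intro z
  simp only [slopeE6, map_add, map_mul, map_pow, map_sub, map_neg, toR4_X, toR4_C_X, toR4_C_C,
    diagE6, dE6, u, x, y, eval_X, eval_C, eval_ofNat, Matrix.of_apply, Matrix.cons_val',
    Matrix.cons_val_one, Matrix.cons_val_fin_one, Matrix.cons_val_zero]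
  linear_combination -(13 / 8) * (s * z 0) ^ 8 * ht

/-- The retraction of `toR4 s t` which eliminates `v` and `x` by `v = 0` and `dE6 s t 0 1 = 0`. -/
def elimE6 (s t : ℂ) : R4 →ₐ[ℂ] ℂ[X][X] :=
  let w : ℂ[X][X] := Polynomial.C Polynomial.X
  let y' : ℂ[X][X] := Polynomial.X + Polynomial.C (Polynomial.C (t + 1 / 2)) * w ^ 3
  aeval ![Polynomial.C (Polynomial.C s⁻¹) * w, 0,
    y' * w + Polynomial.C (Polynomial.C ((t + 1) / 4)) * w ^ 4, y']

lemma elimE6_C (s t a : ℂ) : elimE6 s t (C a) = Polynomial.C (Polynomial.C a) :=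
  (elimE6 s t).commutes a

lemma elimE6_v (s t : ℂ) : elimE6 s t v = 0 := by simp [elimE6, v]

lemma elimE6_y (s t : ℂ) : elimE6 s t y =
    Polynomial.X + Polynomial.C (Polynomial.C (t + 1 / 2)) * Polynomial.C Polynomial.X ^ 3 := by
  simp [elimE6, y]

lemma elimE6_x (s t : ℂ) : elimE6 s t x = elimE6 s t y * Polynomial.C Polynomial.X +
    Polynomial.C (Polynomial.C ((t + 1) / 4)) * Polynomial.C Polynomial.X ^ 4 := by
  simp [elimE6, x, y]

lemma toR4_elimE6_y (s t : ℂ) : toR4 s t (elimE6 s t y) = y := by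
  simp [elimE6_y, toR4_X, toR4_C_X, toR4_C_C]

lemma toR4_elimE6_x (s t : ℂ) : toR4 s t (elimE6 s t x) = x + dE6 s t 0 1 := by
  rw [elimE6_x, map_add, map_mul, toR4_elimE6_y]
  simp only [map_mul, map_pow, toR4_C_X, toR4_C_C, dE6, Matrix.of_apply, Matrix.cons_val',
    Matrix.cons_val_one, Matrix.cons_val_fin_one, Matrix.cons_val_zero]
  ring

lemma span_le_comap_toR4 (s : ℂ) {t : ℂ} (ht : t ^ 2 = 1 / 3) :
    Ideal.span {quadE6 t, Polynomial.C (slopeE6 t) * Polynomial.X} ≤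
      (entryIdeal (dE6 s t)).comap (toR4 s t) := by
  have hdiag : diagE6 s t ∈ entryIdeal (dE6 s t) := by
    rw [entryIdeal_dE6]
    exact Ideal.subset_span (by simp)
  have hquad : toR4 s t (quadE6 t) ∈ entryIdeal (dE6 s t) := by
    rw [toR4_quadE6 s ht]
    exact add_mem hdiag (Ideal.mul_mem_left _ _ (mem_entryIdeal _ 0 1))
  rw [Ideal.span_le]
  rintro F (rfl | rfl)
  · exact hquad
  · rw [SetLike.mem_coe, Ideal.mem_comap, toR4_C_slopeE6_mul_X s ht]
    exact add_mem (sub_mem (mem_entryIdeal _ 1 0) (Ideal.mul_mem_left _ _ hquad))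
      (Ideal.mul_mem_right _ _ (mem_entryIdeal _ 0 1))

variable {s : ℂ} (hs : s ≠ 0) (t : ℂ)
include hs

lemma elimE6_C_mul_u : elimE6 s t (C s * u) = Polynomial.C Polynomial.X := by
  have hu : elimE6 s t u = Polynomial.C (Polynomial.C s⁻¹) * Polynomial.C Polynomial.X := by
    simp [elimE6, u]
  rw [map_mul, elimE6_C, hu, ← mul_assoc, ← Polynomial.C_mul, ← Polynomial.C_mul (a := s),
    mul_inv_cancel₀ hs, Polynomial.C_1, Polynomial.C_1, one_mul]

lemma elimE6_comp_toR4 : (elimE6 s t).comp (toR4 s t) = AlgHom.id ℂ ℂ[X][X] := by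
  ext
  · simp [toR4_C_X, elimE6_C_mul_u hs]
  · simp [toR4_X, elimE6_C_mul_u hs, elimE6_y]

lemma elimE6_toR4 (F : ℂ[X][X]) : elimE6 s t (toR4 s t F) = F :=
  congr($(elimE6_comp_toR4 hs t) F)

lemma elimE6_dE6_zero_one : elimE6 s t (dE6 s t 0 1) = 0 := by
  simp [dE6, elimE6_C_mul_u hs, elimE6_x, elimE6_y]

lemma toR4_elimE6_u : toR4 s t (elimE6 s t u) = u := by
  have h : u = C s⁻¹ * (C s * u) := by
    rw [← mul_assoc, ← C_mul, inv_mul_cancel₀ hs, C_1, one_mul]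
  conv_lhs => rw [h]
  rw [map_mul, elimE6_C, elimE6_C_mul_u hs, map_mul, toR4_C_C, toR4_C_X, ← h]

lemma toR4_elimE6_sub_mem (r : R4) : toR4 s t (elimE6 s t r) - r ∈ entryIdeal (dE6 s t) := by
  rw [← Ideal.Quotient.eq]
  have hom_eq : (Ideal.Quotient.mkₐ ℂ (entryIdeal (dE6 s t))).comp
      ((toR4 s t).comp (elimE6 s t)) = Ideal.Quotient.mkₐ ℂ (entryIdeal (dE6 s t)) := by
    have hu : toR4 s t (elimE6 s t u) - u ∈ entryIdeal (dE6 s t) := by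
      rw [toR4_elimE6_u hs, sub_self]
      exact zero_mem _
    have hv : toR4 s t (elimE6 s t v) - v ∈ entryIdeal (dE6 s t) := by
      rw [elimE6_v, map_zero, zero_sub, neg_mem_iff, entryIdeal_dE6]
      exact Ideal.subset_span (Set.mem_insert _ _)
    have hx : toR4 s t (elimE6 s t x) - x ∈ entryIdeal (dE6 s t) := by
      rw [toR4_elimE6_x, add_sub_cancel_left]
      exact mem_entryIdeal _ 0 1
    have hy : toR4 s t (elimE6 s t y) - y ∈ entryIdeal (dE6 s t) := by
      rw [toR4_elimE6_y, sub_self]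
      exact zero_mem _
    ext i
    refine Ideal.Quotient.eq.mpr ?_
    match i with
    | 0 => exact hu
    | 1 => exact hv
    | 2 => exact hx
    | 3 => exact hy
  exact congr($hom_eq r)

variable {t} (ht : t ^ 2 = 1 / 3)
include ht

lemma elimE6_diagE6 : elimE6 s t (diagE6 s t) = quadE6 t := by
  simpa [elimE6_toR4 hs, elimE6_dE6_zero_one hs] using
    (congrArg (elimE6 s t) (toR4_quadE6 s ht)).symm

lemma elimE6_dE6_one_zero :
    elimE6 s t (dE6 s t 1 0) = Polynomial.C (slopeE6 t) * Polynomial.X +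
      2 * Polynomial.C Polynomial.X ^ 2 * quadE6 t := by
  have h := congrArg (elimE6 s t) (toR4_C_slopeE6_mul_X s ht)
  rw [map_add, map_sub, map_mul _ (dE6 s t 0 1), elimE6_dE6_zero_one hs, zero_mul, add_zero,
    elimE6_toR4 hs, map_mul, map_mul, map_pow, elimE6_toR4 hs, elimE6_C_mul_u hs, map_ofNat] at h
  rw [h, sub_add_cancel]

lemma entryIdeal_dE6_le_comap_elimE6 : entryIdeal (dE6 s t) ≤
    (Ideal.span {quadE6 t, Polynomial.C (slopeE6 t) * Polynomial.X}).comap (elimE6 s t) := by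
  have hquad : quadE6 t ∈ Ideal.span {quadE6 t, Polynomial.C (slopeE6 t) * Polynomial.X} :=
    Ideal.subset_span (Set.mem_insert _ _)
  rw [entryIdeal_dE6, Ideal.span_le]
  rintro r (rfl | rfl | rfl | rfl) <;> rw [SetLike.mem_coe, Ideal.mem_comap]
  · rw [elimE6_v]
    exact zero_mem _
  · rwa [elimE6_diagE6 hs ht]
  · rw [elimE6_dE6_zero_one hs]
    exact zero_mem _
  · rw [elimE6_dE6_one_zero hs ht]
    exact add_mem (Ideal.subset_span (by simp)) (Ideal.mul_mem_left _ _ hquad)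

/-- Eliminating `v` and `x` presents the quotient by the entries of `dE6 s t` in terms of the two
variables `w` and `y₀` only. -/
def entryQuotientEquiv : (R4 ⧸ entryIdeal (dE6 s t)) ≃ₐ[ℂ]
    ℂ[X][X] ⧸ Ideal.span {quadE6 t, Polynomial.C (slopeE6 t) * Polynomial.X} :=
  AlgEquiv.ofAlgHom
    (Ideal.quotientMapₐ _ (elimE6 s t) (entryIdeal_dE6_le_comap_elimE6 hs ht))
    (Ideal.quotientMapₐ _ (toR4 s t) (span_le_comap_toR4 s ht))
    (Ideal.Quotient.algHom_ext ℂ <| AlgHom.ext fun F =>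
      congrArg (Ideal.Quotient.mk _) (elimE6_toR4 hs t F))
    (Ideal.Quotient.algHom_ext ℂ <| AlgHom.ext fun r =>
      Ideal.Quotient.eq.mpr (toR4_elimE6_sub_mem hs t r))

lemma finrank_quotient_entryIdeal_dE6 :
    Module.finrank ℂ (R4 ⧸ entryIdeal (dE6 s t)) = 16 := by
  have hslope : 3 / 2 * t ≠ 0 := by
    refine mul_ne_zero (by norm_num) fun h => ?_
    norm_num [h] at ht
  have hconst : 13 / 12 + 15 / 8 * t ≠ 0 := by
    intro h
    refine one_ne_zero (α := ℂ) ?_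
    linear_combination (24 * (26 - 45 * t)) * h + 2025 * ht
  rw [(entryQuotientEquiv hs ht).toLinearEquiv.finrank_eq,
    finrank_quotient_span_pair_monic_C_mul_X (quadE6_monic t) (natDegree_quadE6 t)
      (r := slopeE6 t)
      (mul_ne_zero (Polynomial.C_ne_zero.mpr hslope) (pow_ne_zero _ Polynomial.X_ne_zero))
      (coeff_zero_quadE6 t ▸
        mul_ne_zero (Polynomial.C_ne_zero.mpr hconst) (pow_ne_zero _ Polynomial.X_ne_zero)),
    coeff_zero_quadE6, slopeE6, Polynomial.natDegree_C_mul_X_pow _ _ hslope,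
    Polynomial.natDegree_C_mul_X_pow _ _ hconst]

end EntryQuotient

theorem stmt11_general {s t : ℂ} (ht : t ^ 2 = 1 / 3) (hs : s ≠ 0) :
    Module.finrank ℂ
      (↥(EvenEnd (DE6 s t)) ⧸
        Submodule.comap (EvenEnd (DE6 s t)).subtype (NullHtpy (DE6 s t))) = 16 :=
  (finrank_EvenEnd_quotient_NullHtpy fun _ _ => exists_isNullHomotopic_dE6_sub_smul_one).trans
    (finrank_quotient_entryIdeal_dE6 hs ht)

theorem stmt11 (s t : ℂ) (ht : t ^ 2 = 1/3) (hs : s ^ 12 = -576 * (26 * t - 15)) :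
    Module.finrank ℂ
      (↥(EvenEnd (DE6 s t)) ⧸
        Submodule.comap (EvenEnd (DE6 s t)).subtype (NullHtpy (DE6 s t))) = 16 := by
  refine stmt11_general ht fun hs0 => one_ne_zero (α := ℂ) ?_
  rw [hs0] at hs
  linear_combination (3 / 576 * (26 * t + 15)) * hs - 2028 * ht
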